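/- arXiv:2505.06050 — 3 statements merged into one kernel-verified Lean document; each statement's English description precedes it below -/
import Mathlib

section
/- For positive semidefinite operators A, B on a finite-dimensional Hilbert space and any s ∈ [0,1], one has Tr(A·{A ≤ B}) + Tr(B·{A > B}) ≤ Tr(A^{1-s} B^s), where {A ≤ B} denotes the projection onto the span of eigenvectors of A−B with non-positive eigenvalues and {A > B} its complement. -/
open scoped ComplexOrder

/-!
Let `τ` be a positive tracial map, such as the trace. For any common upper bound `c` of `a` and
`b`, operator monotonicity of `x ↦ x ^ s` and `x ↦ x ^ (1 - s)` lets one replace `a` by `c` twice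
and then `c` by `b` in `τ a - τ (a ^ (1 - s) * b ^ s) = τ (a ^ (1 - s) * (a ^ s - b ^ s))`, which
shows that it is at most `τ c - τ b`. The choice `c = b + (a - b)⁺` gives
`τ a - τ (a - b)⁺ ≤ τ (a ^ (1 - s) * b ^ s)`, and the left-hand side is the sum of the two error
terms because `(a - b)⁺ = (a - b) * {a > b}`.
-/

section FunctionalCalculus

variable {A : Type*} [Ring A] [StarRing A] [TopologicalSpace A] [Algebra ℝ A]
  [ContinuousFunctionalCalculus ℝ A IsSelfAdjoint]

lemma rpow_add_of_exponent_nonneg [PartialOrder A] [StarOrderedRing A] [NonnegSpectrumClass ℝ A]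
    (a : A) {x y : ℝ} (hx : 0 ≤ x) (hy : 0 ≤ y) : a ^ (x + y) = a ^ x * a ^ y := by
  simp only [CFC.rpow_def]
  rw [← cfc_mul (· ^ x) (· ^ y) a (NNReal.continuous_rpow_const hx).continuousOn
    (NNReal.continuous_rpow_const hy).continuousOn]
  exact cfc_congr fun z _ ↦ NNReal.rpow_add_of_nonneg z hx hy

lemma mul_one_sub_cfc_nonpos_eq_posPart [T2Space A] {a : A} (ha : IsSelfAdjoint a)
    (hcont : ContinuousOn (fun x : ℝ ↦ if x ≤ 0 then (1 : ℝ) else 0) (spectrum ℝ a)) :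
    a * (1 - cfc (fun x : ℝ ↦ if x ≤ 0 then 1 else 0) a) = a⁺ := by
  calc a * (1 - cfc (fun x : ℝ ↦ if x ≤ 0 then 1 else 0) a)
      = cfc (fun x : ℝ ↦ x * (1 - if x ≤ 0 then 1 else 0)) a := by
        rw [cfc_mul (fun x ↦ x) _ a, cfc_sub (fun _ ↦ 1) _ a, cfc_id' ℝ a, cfc_const_one ℝ a]
    _ = cfc (·⁺ : ℝ → ℝ) a := cfc_congr fun x _ ↦ by
        rcases le_or_gt x 0 with hx | hx
        · simp [hx]
        · simp [hx.not_ge, hx.le]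
    _ = a⁺ := by rw [CFC.posPart_def, cfcₙ_eq_cfc]

end FunctionalCalculus

/-- `τ` is tracial if it does not see the order of the two factors of a product, the one property
of the matrix trace besides positivity that the inequality rests on. It is stated for bare
functions, so that it applies to positive linear maps through their coercion. -/
def IsTracial {A E : Type*} [Mul A] (τ : A → E) : Prop :=
  ∀ x y, τ (x * y) = τ (y * x)

namespace IsTracial

variable {R A E : Type*} [Semiring R] [PartialOrder A]
  [AddCommGroup E] [PartialOrder E] [Module R E]

section NonUnital

variable [NonUnitalCStarAlgebra A] [StarOrderedRing A] [Module R A] {τ : A →ₚ[R] E}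

lemma map_mul_nonneg (hτ : IsTracial τ) {x y : A} (hx : 0 ≤ x) (hy : 0 ≤ y) :
    0 ≤ τ (x * y) := by
  obtain ⟨z, rfl⟩ := CStarAlgebra.nonneg_iff_eq_star_mul_self.mp hx
  rw [mul_assoc, hτ]
  exact τ.map_nonneg (star_right_conjugate_nonneg hy z)

variable [IsOrderedAddMonoid E]

lemma map_mul_le_map_mul_left (hτ : IsTracial τ) {x y z : A} (hx : 0 ≤ x) (hyz : y ≤ z) :
    τ (x * y) ≤ τ (x * z) := by
  rw [← sub_nonneg, ← map_sub, ← mul_sub]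
  exact hτ.map_mul_nonneg hx (sub_nonneg.mpr hyz)

lemma map_mul_le_map_mul_right (hτ : IsTracial τ) {x y z : A} (hx : 0 ≤ x) (hyz : y ≤ z) :
    τ (y * x) ≤ τ (z * x) := by
  rw [hτ y, hτ z]
  exact hτ.map_mul_le_map_mul_left hx hyz

end NonUnital

variable [IsOrderedAddMonoid E] [CStarAlgebra A] [StarOrderedRing A] [Module R A]
  {τ : A →ₚ[R] E} {a b : A} {s : ℝ}

lemma map_sub_map_rpow_mul_rpow_le (hτ : IsTracial τ) {c : A} (ha : 0 ≤ a) (hb : 0 ≤ b)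
    (hac : a ≤ c) (hbc : b ≤ c) (hs : s ∈ Set.Icc (0 : ℝ) 1) :
    τ a - τ (a ^ (1 - s) * b ^ s) ≤ τ c - τ b := by
  have hs' : 1 - s ∈ Set.Icc (0 : ℝ) 1 := Set.Icc.one_sub_mem hs
  have rpow_mul_rpow {x : A} (hx : 0 ≤ x) : x ^ (1 - s) * x ^ s = x := by
    rw [← rpow_add_of_exponent_nonneg x hs'.1 hs.1, sub_add_cancel, CFC.rpow_one x hx]
  calc τ a - τ (a ^ (1 - s) * b ^ s)
      = τ (a ^ (1 - s) * (a ^ s - b ^ s)) := by rw [mul_sub, rpow_mul_rpow ha, map_sub]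
    _ ≤ τ (a ^ (1 - s) * (c ^ s - b ^ s)) :=
        hτ.map_mul_le_map_mul_left CFC.rpow_nonneg
          (sub_le_sub_right (CFC.rpow_le_rpow hs hac) _)
    _ ≤ τ (c ^ (1 - s) * (c ^ s - b ^ s)) :=
        hτ.map_mul_le_map_mul_right (sub_nonneg.mpr (CFC.rpow_le_rpow hs hbc))
          (CFC.rpow_le_rpow hs' hac)
    _ = τ c - τ (c ^ (1 - s) * b ^ s) := by
        rw [mul_sub, rpow_mul_rpow (ha.trans hac), map_sub]
    _ ≤ τ c - τ (b ^ (1 - s) * b ^ s) :=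
        sub_le_sub_left (hτ.map_mul_le_map_mul_right CFC.rpow_nonneg
          (CFC.rpow_le_rpow hs' hbc)) _
    _ = τ c - τ b := by rw [rpow_mul_rpow hb]

lemma map_sub_map_posPart_le (hτ : IsTracial τ) (ha : 0 ≤ a) (hb : 0 ≤ b)
    (hs : s ∈ Set.Icc (0 : ℝ) 1) : τ a - τ (a - b)⁺ ≤ τ (a ^ (1 - s) * b ^ s) := by
  have hac : a ≤ b + (a - b)⁺ :=
    sub_le_iff_le_add'.mp (CFC.le_posPart (ha.isSelfAdjoint.sub hb.isSelfAdjoint))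
  have hbc : b ≤ b + (a - b)⁺ := le_add_of_nonneg_right (CFC.posPart_nonneg _)
  have h := hτ.map_sub_map_rpow_mul_rpow_le ha hb hac hbc hs
  rwa [map_add, add_sub_cancel_left, sub_le_comm] at h

end IsTracial

/-- `hcont` places the spectral projection `{a ≤ b}` in the continuous functional calculus: at a
function that is discontinuous on the spectrum, `cfc` takes the junk value `0`. -/
theorem quantum_chernoff_bound_general {R A E : Type*} [Semiring R]
    [CStarAlgebra A] [PartialOrder A] [StarOrderedRing A] [Module R A]
    [AddCommGroup E] [PartialOrder E] [IsOrderedAddMonoid E] [Module R E]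
    {τ : A →ₚ[R] E} (hτ : IsTracial τ) {a b : A} (ha : 0 ≤ a) (hb : 0 ≤ b)
    (hcont : ContinuousOn (fun x : ℝ ↦ if x ≤ 0 then (1 : ℝ) else 0) (spectrum ℝ (a - b)))
    {s : ℝ} (hs : s ∈ Set.Icc (0 : ℝ) 1) :
    τ (a * cfc (fun x : ℝ ↦ if x ≤ 0 then 1 else 0) (a - b))
      + τ (b * (1 - cfc (fun x : ℝ ↦ if x ≤ 0 then 1 else 0) (a - b)))
      ≤ τ (a ^ (1 - s) * b ^ s) := by
  have hab : IsSelfAdjoint (a - b) := ha.isSelfAdjoint.sub hb.isSelfAdjoint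
  set p := cfc (fun x : ℝ ↦ if x ≤ 0 then 1 else 0) (a - b)
  calc τ (a * p) + τ (b * (1 - p))
      = τ a - τ ((a - b) * (1 - p)) := by
        rw [← map_add, ← map_sub]
        congr 1
        noncomm_ring
    _ = τ a - τ (a - b)⁺ := by rw [mul_one_sub_cfc_nonpos_eq_posPart hab hcont]
    _ ≤ τ (a ^ (1 - s) * b ^ s) := hτ.map_sub_map_posPart_le ha hb hs

/-- Audenaert et al. quantum Chernoff bound inequality:
`Tr(A·{A ≤ B}) + Tr(B·{A > B}) ≤ Tr(A^{1-s} B^s)` for PSD matrices `A, B` and `s ∈ [0,1]`,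
where `{A ≤ B}` is the spectral projection of `A - B` onto the eigenvalues `≤ 0` and
`{A > B} = I - {A ≤ B}`. -/
theorem quantum_chernoff_bound {d : ℕ} (A B : Matrix (Fin d) (Fin d) ℂ)
    (hA : A.PosSemidef) (hB : B.PosSemidef) (s : ℝ) (hs : s ∈ Set.Icc (0:ℝ) 1) :
    ((A * ((hA.1.sub hB.1).cfc fun x : ℝ => if x ≤ 0 then 1 else 0)).trace).re
      + ((B * (1 - (hA.1.sub hB.1).cfc fun x : ℝ => if x ≤ 0 then 1 else 0)).trace).re
      ≤ (((hA.1.cfc fun x : ℝ => x ^ (1 - s)) * (hB.1.cfc fun x : ℝ => x ^ s)).trace).re := by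
  open scoped MatrixOrder Matrix.Norms.L2Operator in
  simpa only [Matrix.tracePositiveLinearMap_apply, (hA.1.sub hB.1).cfc_eq, hA.1.cfc_eq, hB.1.cfc_eq,
    CFC.rpow_eq_cfc_real hA.nonneg, CFC.rpow_eq_cfc_real hB.nonneg, Complex.add_re] using
    (Complex.le_def.mp (quantum_chernoff_bound_general
      (τ := Matrix.tracePositiveLinearMap (Fin d) ℂ ℂ) Matrix.trace_mul_comm hA.nonneg hB.nonneg
      (Matrix.finite_real_spectrum.continuousOn _) hs)).1
end

section
/- Let X be a finite alphabet and t a type of length-n sequences over X. Then the number of sequences of type t satisfies (n+1)^{-|X|} · 2^{n H(t)} ≤ |T_n^t| ≤ 2^{n H(t)}, where H(t) = −∑_x t(x) log₂ t(x) is the Shannon entropy. -/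
/-!
Sequences with prescribed symbol counts `c` form one orbit under permuting positions, so by
orbit-stabilizer the type class has multinomial size `n! / ∏ c(x)!`. Expand `n ^ n = (∑ c(x)) ^ n`
by the multinomial theorem. The term with exponent vector `c` is `n! / ∏ c(x)! * ∏ c(x) ^ c(x)`; it
is at most the whole sum, which gives the upper bound. Because `c! * c ^ k ≤ k! * c ^ c`, it is also
the largest of the at most `(n + 1) ^ |X|` terms, which gives the lower bound. Finally,
`n ^ n / ∏ c(x) ^ c(x)` is `2 ^ (n * H(c / n))`, where `0 ^ 0 = 1` accounts for absent symbols.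
-/

/-- The empirical distribution (type) of a sequence `xs : Fin n → X`. -/
noncomputable def typeOf {X : Type*} [Fintype X] [DecidableEq X] (n : ℕ) (xs : Fin n → X) :
    X → ℝ :=
  fun a => ((Finset.univ.filter fun i => xs i = a).card : ℝ) / n

/-- Base-2 Shannon entropy. -/
noncomputable def shannonEntropy {X : Type*} [Fintype X] (t : X → ℝ) : ℝ :=
  -∑ x, t x * Real.logb 2 (t x)

section

open Finset
open scoped Nat

section SymbolCount

variable {ι X : Type*} [Fintype ι] [DecidableEq X]

/-- The unnormalized type of a sequence `f`: the number of positions carrying each symbol. The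
positions range over an arbitrary finite type `ι`, with `ι = Fin n` for sequences of length `n`. -/
def symbolCount (f : ι → X) (a : X) : ℕ :=
  #{i | f i = a}

lemma sum_symbolCount [Fintype X] (f : ι → X) : ∑ a, symbolCount f a = Fintype.card ι :=
  (card_eq_sum_card_fiberwise fun i _ => mem_univ (f i)).symm

lemma symbolCount_comp_perm (f : ι → X) (σ : Equiv.Perm ι) :
    symbolCount (f ∘ σ) = symbolCount f :=
  funext fun _ => card_equiv σ (by simp)

lemma exists_comp_perm_eq_of_symbolCount_eq {f g : ι → X} (h : symbolCount g = symbolCount f) :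
    ∃ σ : Equiv.Perm ι, f ∘ σ = g := by
  have card_fiber_eq (a : X) : Fintype.card {i // g i = a} = Fintype.card {i // f i = a} := by
    simpa only [Fintype.card_subtype, symbolCount] using congrFun h a
  let fiberEquiv (a : X) := Fintype.equivOfCardEq (card_fiber_eq a)
  refine ⟨(Equiv.sigmaFiberEquiv g).symm.trans
    ((Equiv.sigmaCongrRight fiberEquiv).trans (Equiv.sigmaFiberEquiv f)), ?_⟩
  funext i
  exact (fiberEquiv (g i) ⟨i, rfl⟩).2

lemma orbit_domMulAct_perm_eq_setOf_symbolCount_eq (f : ι → X) :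
    MulAction.orbit (Equiv.Perm ι)ᵈᵐᵃ f = {g | symbolCount g = symbolCount f} := by
  ext g
  constructor
  · rintro ⟨σ, rfl⟩
    exact symbolCount_comp_perm f (DomMulAct.mk.symm σ)
  · intro h
    obtain ⟨σ, rfl⟩ := exists_comp_perm_eq_of_symbolCount_eq h
    exact ⟨DomMulAct.mk σ, rfl⟩

lemma card_stabilizer_domMulAct_perm [Fintype X] (f : ι → X) :
    Nat.card (MulAction.stabilizer (Equiv.Perm ι)ᵈᵐᵃ f) = ∏ a, (symbolCount f a)! := by
  rw [Nat.card_congr (MulOpposite.opEquiv.trans (DomMulAct.stabilizerMulEquiv f).toEquiv),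
    Nat.card_pi]
  exact prod_congr rfl fun a _ => by
    rw [Nat.card_perm, Nat.card_eq_fintype_card, Fintype.card_subtype, symbolCount]

lemma ncard_setOf_symbolCount_eq [Fintype X] (f : ι → X) :
    {g : ι → X | symbolCount g = symbolCount f}.ncard = Nat.multinomial univ (symbolCount f) := by
  have orbit_stabilizer := (MulAction.stabilizer (Equiv.Perm ι)ᵈᵐᵃ f).card_mul_index
  rw [MulAction.index_stabilizer, orbit_domMulAct_perm_eq_setOf_symbolCount_eq,
    card_stabilizer_domMulAct_perm, Nat.card_congr DomMulAct.mk.symm, Nat.card_perm,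
    Nat.card_eq_fintype_card, ← sum_symbolCount f, ← Nat.multinomial_spec] at orbit_stabilizer
  exact Nat.eq_of_mul_eq_mul_left (by positivity) orbit_stabilizer

end SymbolCount

section Multinomial

variable {α : Type*}

lemma factorial_mul_pow_le_factorial_mul_pow_self (c k : ℕ) : c ! * c ^ k ≤ k ! * c ^ c := by
  rcases le_total c k with hck | hkc
  · calc c ! * c ^ k = c ! * c ^ (k - c) * c ^ c := by
          rw [mul_assoc, ← pow_add, Nat.sub_add_cancel hck]
      _ ≤ k ! * c ^ c := by
          gcongr
          exact Nat.factorial_mul_pow_sub_le_factorial hck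
  · have factorial_le : c ! ≤ k ! * c ^ (c - k) := by
      rw [← Nat.factorial_mul_descFactorial (Nat.sub_le c k), Nat.sub_sub_self hkc]
      gcongr
      exact Nat.descFactorial_le_pow c (c - k)
    calc c ! * c ^ k ≤ k ! * c ^ (c - k) * c ^ k := by gcongr
      _ = k ! * c ^ c := by rw [mul_assoc, ← pow_add, Nat.sub_add_cancel hkc]

lemma multinomial_mul_prod_pow_le (s : Finset α) {c k : α → ℕ}
    (h : ∑ a ∈ s, k a = ∑ a ∈ s, c a) :
    Nat.multinomial s k * ∏ a ∈ s, c a ^ k a ≤ Nat.multinomial s c * ∏ a ∈ s, c a ^ c a := by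
  have factorials_pos : 0 < (∏ a ∈ s, (k a)!) * ∏ a ∈ s, (c a)! := by positivity
  refine Nat.le_of_mul_le_mul_left ?_ factorials_pos
  calc (∏ a ∈ s, (k a)!) * (∏ a ∈ s, (c a)!) * (Nat.multinomial s k * ∏ a ∈ s, c a ^ k a)
      = (∑ a ∈ s, c a)! * ∏ a ∈ s, (c a)! * c a ^ k a := by
        rw [← h, ← Nat.multinomial_spec, prod_mul_distrib]
        ring
    _ ≤ (∑ a ∈ s, c a)! * ∏ a ∈ s, (k a)! * c a ^ c a := by
        refine Nat.mul_le_mul_left _ (prod_le_prod' fun a _ => ?_)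
        exact factorial_mul_pow_le_factorial_mul_pow_self (c a) (k a)
    _ = (∏ a ∈ s, (k a)!) * (∏ a ∈ s, (c a)!) *
          (Nat.multinomial s c * ∏ a ∈ s, c a ^ c a) := by
        rw [← Nat.multinomial_spec, prod_mul_distrib]
        ring

lemma card_piAntidiag_le [DecidableEq α] (s : Finset α) (n : ℕ) :
    #(piAntidiag s n) ≤ (n + 1) ^ #s := by
  have card_pi_range : #(s.pi fun _ => range (n + 1)) = (n + 1) ^ #s := by simp
  rw [← card_pi_range]
  refine card_le_card_of_injOn (fun k a _ => k a) (fun k hk => ?_) fun k hk l hl hkl => ?_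
  · simp only [mem_coe, mem_piAntidiag] at hk
    simp only [mem_coe, mem_pi, mem_range, Nat.lt_succ_iff]
    exact fun a ha => hk.1 ▸ single_le_sum_of_canonicallyOrdered ha
  · simp only [mem_coe, mem_piAntidiag] at hk hl
    funext a
    by_cases ha : a ∈ s
    · exact congrFun₂ hkl a ha
    · rw [not_imp_comm.1 (hk.2 a) ha, not_imp_comm.1 (hl.2 a) ha]

lemma multinomial_mul_prod_pow_self_le (s : Finset α) (c : α → ℕ) :
    Nat.multinomial s c * ∏ a ∈ s, c a ^ c a ≤ (∑ a ∈ s, c a) ^ ∑ a ∈ s, c a := by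
  classical
  -- The exponent vectors in `piAntidiag s n` vanish outside `s`, so `c` itself need not be one.
  let c' (a : α) : ℕ := if a ∈ s then c a else 0
  have c'_eq : ∀ a ∈ s, c' a = c a := fun a ha => if_pos ha
  have c'_mem : c' ∈ piAntidiag s (∑ a ∈ s, c a) :=
    mem_piAntidiag.2 ⟨sum_congr rfl c'_eq, fun a => not_imp_comm.1 fun ha => if_neg ha⟩
  calc Nat.multinomial s c * ∏ a ∈ s, c a ^ c a
      = Nat.multinomial s c' * ∏ a ∈ s, c a ^ c' a :=
        congrArg₂ (· * ·) (Nat.multinomial_congr c'_eq).symm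
          (prod_congr rfl fun a ha => by rw [c'_eq a ha])
    _ ≤ ∑ k ∈ piAntidiag s (∑ a ∈ s, c a), Nat.multinomial s k * ∏ a ∈ s, c a ^ k a :=
        single_le_sum_of_canonicallyOrdered
          (f := fun k => Nat.multinomial s k * ∏ a ∈ s, c a ^ k a) c'_mem
    _ = (∑ a ∈ s, c a) ^ ∑ a ∈ s, c a := (sum_pow_eq_sum_piAntidiag s c _).symm

lemma sum_pow_sum_le_mul_multinomial (s : Finset α) (c : α → ℕ) :
    (∑ a ∈ s, c a) ^ ∑ a ∈ s, c a ≤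
      ((∑ a ∈ s, c a) + 1) ^ #s * (Nat.multinomial s c * ∏ a ∈ s, c a ^ c a) := by
  classical
  set n := ∑ a ∈ s, c a
  calc (∑ a ∈ s, c a) ^ n
      = ∑ k ∈ piAntidiag s n, Nat.multinomial s k * ∏ a ∈ s, c a ^ k a :=
        sum_pow_eq_sum_piAntidiag s c n
    _ ≤ #(piAntidiag s n) * (Nat.multinomial s c * ∏ a ∈ s, c a ^ c a) :=
        sum_le_card_nsmul _ _ _ fun k hk =>
          multinomial_mul_prod_pow_le s (mem_piAntidiag.1 hk).1
    _ ≤ (n + 1) ^ #s * (Nat.multinomial s c * ∏ a ∈ s, c a ^ c a) := by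
        gcongr
        exact card_piAntidiag_le s n

end Multinomial

section Entropy

variable {X : Type*} [Fintype X]

lemma rpow_neg_mul_logb_div_mul_rpow {b w N : ℝ} (hb : 0 < b) (hb_ne_one : b ≠ 1) (hw : 0 ≤ w)
    (hN : 0 < N) : b ^ (-(w * Real.logb b (w / N))) * w ^ w = N ^ w := by
  rcases hw.eq_or_lt with rfl | hw
  · simp
  · rw [← mul_neg, ← Real.logb_inv, inv_div, mul_comm w, Real.rpow_mul hb.le,
      Real.rpow_logb hb hb_ne_one (by positivity), Real.div_rpow hN.le hw.le,
      div_mul_cancel₀ _ (by positivity)]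

lemma two_rpow_mul_shannonEntropy_mul_prod_rpow {w : X → ℝ} (hw : ∀ x, 0 ≤ w x) :
    (2 : ℝ) ^ ((∑ x, w x) * shannonEntropy fun x => w x / ∑ y, w y) * ∏ x, w x ^ w x =
      (∑ x, w x) ^ ∑ x, w x := by
  set N := ∑ x, w x with hN_def
  have N_nonneg : 0 ≤ N := sum_nonneg fun x _ => hw x
  rcases N_nonneg.eq_or_lt with hN | hN
  · have hw_zero : ∀ x, w x = 0 := by
      simpa [sum_eq_zero_iff_of_nonneg, hw] using hN_def.symm.trans hN.symm
    simp [← hN, hw_zero]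
  have entropy_eq : N * shannonEntropy (fun x => w x / N) =
      ∑ x, -(w x * Real.logb 2 (w x / N)) := by
    rw [shannonEntropy, mul_neg, mul_sum, sum_neg_distrib]
    congr! 2 with x
    rw [← mul_assoc, mul_div_cancel₀ _ hN.ne']
  rw [entropy_eq, Real.rpow_sum_of_pos two_pos, ← prod_mul_distrib, hN_def,
    Real.rpow_sum_of_pos hN]
  exact prod_congr rfl fun x _ =>
    rpow_neg_mul_logb_div_mul_rpow two_pos one_lt_two.ne' (hw x) hN

lemma two_rpow_mul_shannonEntropy_mul_prod_pow (c : X → ℕ) :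
    (2 : ℝ) ^ ((∑ x, c x : ℕ) * shannonEntropy fun x => (c x : ℝ) / (∑ y, c y : ℕ)) *
      (∏ x, c x ^ c x : ℕ) = ((∑ x, c x) ^ ∑ x, c x : ℕ) := by
  simpa [← Nat.cast_sum, Real.rpow_natCast] using
    two_rpow_mul_shannonEntropy_mul_prod_rpow fun x => (c x).cast_nonneg

lemma multinomial_le_two_rpow_mul_shannonEntropy (c : X → ℕ) :
    (Nat.multinomial univ c : ℝ) ≤
      2 ^ ((∑ x, c x : ℕ) * shannonEntropy fun x => (c x : ℝ) / (∑ y, c y : ℕ)) := by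
  have prod_pow_pos : (0 : ℝ) < (∏ x, c x ^ c x : ℕ) := by
    exact_mod_cast prod_pos fun x _ => Nat.pow_self_pos
  refine le_of_mul_le_mul_right ?_ prod_pow_pos
  rw [two_rpow_mul_shannonEntropy_mul_prod_pow]
  exact_mod_cast multinomial_mul_prod_pow_self_le univ c

lemma two_rpow_mul_shannonEntropy_le_mul_multinomial (c : X → ℕ) :
    (2 : ℝ) ^ ((∑ x, c x : ℕ) * shannonEntropy fun x => (c x : ℝ) / (∑ y, c y : ℕ)) ≤
      ((∑ x, c x : ℕ) + 1) ^ Fintype.card X * Nat.multinomial univ c := by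
  have prod_pow_pos : (0 : ℝ) < (∏ x, c x ^ c x : ℕ) := by
    exact_mod_cast prod_pos fun x _ => Nat.pow_self_pos
  refine le_of_mul_le_mul_right ?_ prod_pow_pos
  rw [two_rpow_mul_shannonEntropy_mul_prod_pow, mul_assoc]
  exact_mod_cast sum_pow_sum_le_mul_multinomial univ c

end Entropy

lemma typeOf_eq_typeOf_iff {X : Type*} [Fintype X] [DecidableEq X] {n : ℕ} {f g : Fin n → X} :
    typeOf n g = typeOf n f ↔ symbolCount g = symbolCount f := by
  rcases n.eq_zero_or_pos with rfl | hn
  · simp [Subsingleton.elim g f]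
  · have hn' : (n : ℝ) ≠ 0 := by positivity
    simp only [funext_iff, typeOf, symbolCount, div_left_inj' hn', Nat.cast_inj]

end

/-- Bounds on the cardinality of a type class:
`(n+1)^{-|X|} 2^{n H(t)} ≤ |T_n^t| ≤ 2^{n H(t)}`. -/
theorem type_class_card_bounds {X : Type*} [Fintype X] [DecidableEq X] (n : ℕ) (t : X → ℝ)
    (ht : ∃ xs : Fin n → X, typeOf n xs = t) :
    ((n : ℝ) + 1) ^ (-(Fintype.card X : ℝ)) * 2 ^ ((n : ℝ) * shannonEntropy t) ≤
        ({xs : Fin n → X | typeOf n xs = t}.ncard : ℝ) ∧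
      ({xs : Fin n → X | typeOf n xs = t}.ncard : ℝ) ≤ 2 ^ ((n : ℝ) * shannonEntropy t) := by
  obtain ⟨f, rfl⟩ := ht
  have sum_eq : ∑ a, symbolCount f a = n := by rw [sum_symbolCount, Fintype.card_fin]
  have class_card : {xs | typeOf n xs = typeOf n f}.ncard =
      Nat.multinomial Finset.univ (symbolCount f) := by
    simp only [typeOf_eq_typeOf_iff, ncard_setOf_symbolCount_eq]
  have lower := two_rpow_mul_shannonEntropy_le_mul_multinomial (symbolCount f)
  have upper := multinomial_le_two_rpow_mul_shannonEntropy (symbolCount f)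
  rw [sum_eq, ← class_card] at lower upper
  refine ⟨?_, upper⟩
  rw [Real.rpow_neg (by positivity), Real.rpow_natCast, inv_mul_le_iff₀ (by positivity)]
  exact lower
end

section
/- Let {p(x,a)} be a joint probability distribution on a finite product R × A with marginal p(x) on R and conditionals p(·|x) on A. Then for r ≥ 0, sup_{1/2 ≤ α ≤ 1} inf_{t ∈ Q(R)} [ 2 D(t‖p_R) + ((1−α)/α)·(r − E_{x∼t} H_α(p(·|x))) ] = inf_{t ∈ Q(R)} inf_{τ} [ 2 D(t‖p_R) + E_{x∼t} D(τ^x‖p(·|x)) + max{0, r − E_{x∼t} H(τ^x)} ], where the inner infimum is over families τ = (τ^x)_{x∈R} of probability distributions on A with supp(τ^x) ⊆ supp(p(·|x)) for all x. -/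
/-- `p` is a probability distribution on the finite set `X`. -/
def IsProb {X : Type*} [Fintype X] (p : X → ℝ) : Prop :=
  (∀ x, 0 ≤ p x) ∧ ∑ x, p x = 1

/-- Base-2 relative entropy (Kullback–Leibler divergence). -/
noncomputable def Dkl {X : Type*} [Fintype X] (t p : X → ℝ) : ℝ :=
  ∑ x, t x * Real.logb 2 (t x / p x)

/-- Rényi entropy `H_α` for `α ∈ [0,1)`, extended by the Shannon entropy at `α = 1`. -/
noncomputable def renyiEntropy {X : Type*} [Fintype X] (α : ℝ) (p : X → ℝ) : ℝ :=
  if α = 1 then shannonEntropy p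
  else (1 / (1 - α)) * Real.logb 2 (∑ x, if p x = 0 then 0 else p x ^ α)

/-!
Fix `α` and put `s = (1 - α) / α`. For a single letter,
`D(τ‖q) - s H(τ) = D(τ‖q ^ α) / α`, which Gibbs' inequality minimizes at the escort distribution
`τ ∝ q ^ α`, with value `-s H_α(q)`. So the Rényi objective at `t` is the minimum over `τ` of the
Lagrangian `[2 D(t‖p_R) + E D(τ‖p)] + s (r - E H(τ))`, and the Gibbs variational principle gives an
explicit minimizer `(t_α, τ_α)` of the latter, continuous in `α`. Instead of a minimax theorem, the
intermediate value theorem applied to the constraint value `r - E H(τ_α)` then yields an `α` at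
which complementary slackness holds, and this forces strong duality.
-/

open Set

section GibbsInequality

variable {X : Type*} [Fintype X] {p q t m : X → ℝ}

/-- The weight `m` rescaled to total mass `1`; it is `0` when `m` has total mass `0`. -/
noncomputable def normalized (m : X → ℝ) : X → ℝ := fun x => m x / ∑ y, m y

theorem normalized_eq_zero {x : X} (hx : m x = 0) : normalized m x = 0 := by
  rw [normalized, hx, zero_div]

theorem isProb_normalized (hm : ∀ x, 0 ≤ m x) (hsum : 0 < ∑ x, m x) : IsProb (normalized m) :=
  ⟨fun x => div_nonneg (hm x) hsum.le, by
    simp only [normalized, ← Finset.sum_div, div_self hsum.ne']⟩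

theorem IsProb.exists_ne_zero (hp : IsProb p) : ∃ x, p x ≠ 0 := by
  by_contra! h
  simpa [h] using hp.2

theorem IsProb.sum_pos_of_absolutelyContinuous (ht : IsProb t) (hm : ∀ x, 0 ≤ m x)
    (htm : ∀ x, m x = 0 → t x = 0) : 0 < ∑ x, m x := by
  obtain ⟨x, hx⟩ := ht.exists_ne_zero
  exact Finset.sum_pos' (fun y _ => hm y)
    ⟨x, Finset.mem_univ x, (hm x).lt_of_ne' (mt (htm x) hx)⟩

theorem Dkl_self (p : X → ℝ) : Dkl p p = 0 :=
  Finset.sum_eq_zero fun x _ => by by_cases h : p x = 0 <;> simp [h]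

theorem Dkl_nonneg (hp : IsProb p) (hq : IsProb q) (hpq : ∀ x, q x = 0 → p x = 0) :
    0 ≤ Dkl p q := by
  have log_term (x : X) : p x * Real.log (p x / q x) =
      q x * InformationTheory.klFun (p x / q x) + (p x - q x) := by
    by_cases h : q x = 0
    · simp [h, hpq x h]
    · rw [InformationTheory.klFun_apply]
      field_simp
      ring
  have Dkl_eq : Dkl p q =
      (∑ x, q x * InformationTheory.klFun (p x / q x)) / Real.log 2 := by
    simp only [Dkl, Real.logb, ← mul_div_assoc, ← Finset.sum_div, log_term,
      Finset.sum_add_distrib, Finset.sum_sub_distrib, hp.2, hq.2, sub_self, add_zero]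
  rw [Dkl_eq]
  exact div_nonneg (Finset.sum_nonneg fun x _ => mul_nonneg (hq.1 x)
    (InformationTheory.klFun_nonneg (div_nonneg (hp.1 x) (hq.1 x)))) (Real.log_nonneg one_le_two)

theorem Dkl_normalized (ht : IsProb t) (hm : ∑ x, m x ≠ 0) (htm : ∀ x, m x = 0 → t x = 0) :
    Dkl t (normalized m) = Dkl t m + Real.logb 2 (∑ x, m x) := by
  have logb_term (x : X) : t x * Real.logb 2 (t x / normalized m x) =
      t x * Real.logb 2 (t x / m x) + t x * Real.logb 2 (∑ y, m y) := by
    by_cases h : t x = 0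
    · simp [h]
    · rw [normalized, div_div_eq_mul_div, mul_div_right_comm,
        Real.logb_mul (div_ne_zero h (mt (htm x) h)) hm, mul_add]
  simp only [Dkl, logb_term, Finset.sum_add_distrib, ← Finset.sum_mul, ht.2, one_mul]

theorem neg_logb_sum_le_Dkl (ht : IsProb t) (hm : ∀ x, 0 ≤ m x) (htm : ∀ x, m x = 0 → t x = 0) :
    -Real.logb 2 (∑ x, m x) ≤ Dkl t m := by
  have hsum := ht.sum_pos_of_absolutelyContinuous hm htm
  have nonneg := Dkl_nonneg ht (isProb_normalized hm hsum) fun x hx =>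
    htm x ((div_eq_zero_iff.1 hx).resolve_right hsum.ne')
  rw [Dkl_normalized ht hsum.ne' htm] at nonneg
  linarith

theorem Dkl_normalized_self (hm : ∀ x, 0 ≤ m x) (hsum : 0 < ∑ x, m x) :
    Dkl (normalized m) m = -Real.logb 2 (∑ x, m x) := by
  have h := Dkl_normalized (isProb_normalized hm hsum) hsum.ne' fun _ => normalized_eq_zero
  rw [Dkl_self] at h
  linarith

end GibbsInequality

section RenyiEntropy

variable {A : Type*} [Fintype A] {q τ : A → ℝ} {α : ℝ}

/-- The escort distribution of `q` of order `α`, proportional to `q ^ α`. -/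
noncomputable def escort (α : ℝ) (q : A → ℝ) : A → ℝ := normalized fun a => q a ^ α

theorem IsProb.sum_rpow_pos (hq : IsProb q) (α : ℝ) : 0 < ∑ a, q a ^ α := by
  obtain ⟨a, ha⟩ := hq.exists_ne_zero
  exact Finset.sum_pos' (fun b _ => Real.rpow_nonneg (hq.1 b) α)
    ⟨a, Finset.mem_univ a, Real.rpow_pos_of_pos ((hq.1 a).lt_of_ne' ha) α⟩

theorem IsProb.escort (hq : IsProb q) (α : ℝ) : IsProb (escort α q) :=
  isProb_normalized (fun a => Real.rpow_nonneg (hq.1 a) α) (hq.sum_rpow_pos α)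

theorem escort_eq_zero (hα : α ≠ 0) {a : A} (ha : q a = 0) : escort α q a = 0 :=
  normalized_eq_zero (by rw [ha, Real.zero_rpow hα])

theorem mul_renyiEntropy (hq : IsProb q) (hα : α ≠ 0) :
    (1 - α) / α * renyiEntropy α q = 1 / α * Real.logb 2 (∑ a, q a ^ α) := by
  by_cases h1 : α = 1
  · simp [h1, hq.2]
  · have hsum : (∑ a, if q a = 0 then 0 else q a ^ α) = ∑ a, q a ^ α :=
      Finset.sum_congr rfl fun a _ => ite_eq_right_iff.2 fun ha => by rw [ha, Real.zero_rpow hα]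
    have h1' : 1 - α ≠ 0 := sub_ne_zero.2 (Ne.symm h1)
    rw [renyiEntropy, if_neg h1, hsum]
    field_simp

theorem Dkl_sub_mul_shannonEntropy (hq : ∀ a, 0 ≤ q a) (hα : α ≠ 0)
    (hτ : ∀ a, q a = 0 → τ a = 0) :
    Dkl τ q - (1 - α) / α * shannonEntropy τ = 1 / α * Dkl τ fun a => q a ^ α := by
  simp only [Dkl, shannonEntropy, mul_neg, sub_neg_eq_add, Finset.mul_sum,
    ← Finset.sum_add_distrib]
  refine Finset.sum_congr rfl fun a _ => ?_
  by_cases h : τ a = 0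
  · simp [h]
  · have hqa : 0 < q a := (hq a).lt_of_ne' (mt (hτ a) h)
    rw [Real.logb_div h hqa.ne', Real.logb_div h (Real.rpow_pos_of_pos hqa α).ne',
      Real.logb_rpow_eq_mul_logb_of_pos hqa]
    field_simp
    ring

theorem neg_mul_renyiEntropy_le (hq : IsProb q) (hα : 0 < α) (hτ : IsProb τ)
    (hτq : ∀ a, q a = 0 → τ a = 0) :
    -((1 - α) / α * renyiEntropy α q) ≤ Dkl τ q - (1 - α) / α * shannonEntropy τ := by
  rw [Dkl_sub_mul_shannonEntropy hq.1 hα.ne' hτq, mul_renyiEntropy hq hα.ne', ← mul_neg]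
  gcongr
  exact neg_logb_sum_le_Dkl hτ (fun a => Real.rpow_nonneg (hq.1 a) α) fun a ha =>
    hτq a ((Real.rpow_eq_zero (hq.1 a) hα.ne').1 ha)

theorem Dkl_escort_sub_mul_shannonEntropy (hq : IsProb q) (hα : α ≠ 0) :
    Dkl (escort α q) q - (1 - α) / α * shannonEntropy (escort α q) =
      -((1 - α) / α * renyiEntropy α q) := by
  rw [Dkl_sub_mul_shannonEntropy hq.1 hα fun a => escort_eq_zero hα, mul_renyiEntropy hq hα,
    ← mul_neg, escort,
    Dkl_normalized_self (fun a => Real.rpow_nonneg (hq.1 a) α) (hq.sum_rpow_pos α)]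

end RenyiEntropy

section GibbsVariationalPrinciple

variable {R : Type*} {u t f : R → ℝ} {c : ℝ}

/-- The Boltzmann weight with reference measure `u`, energy `f` and temperature `c`, in base 2. -/
noncomputable def gibbsWeight (c : ℝ) (u f : R → ℝ) : R → ℝ := fun x => u x * 2 ^ (-f x / c)

theorem gibbsWeight_eq_zero_iff {x : R} : gibbsWeight c u f x = 0 ↔ u x = 0 :=
  mul_eq_zero_iff_right (Real.rpow_pos_of_pos two_pos _).ne'

theorem gibbsWeight_nonneg (hu : ∀ x, 0 ≤ u x) (x : R) : 0 ≤ gibbsWeight c u f x :=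
  mul_nonneg (hu x) (Real.rpow_nonneg zero_le_two _)

variable [Fintype R]

theorem sum_gibbsWeight_pos (hu : IsProb u) : 0 < ∑ x, gibbsWeight c u f x :=
  hu.sum_pos_of_absolutelyContinuous (gibbsWeight_nonneg hu.1) fun _ => gibbsWeight_eq_zero_iff.1

/-- The Gibbs distribution, proportional to the Boltzmann weight. -/
noncomputable def gibbs (c : ℝ) (u f : R → ℝ) : R → ℝ := normalized (gibbsWeight c u f)

theorem gibbs_eq_zero {x : R} (hx : u x = 0) : gibbs c u f x = 0 :=
  normalized_eq_zero (gibbsWeight_eq_zero_iff.2 hx)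

theorem IsProb.gibbs (hu : IsProb u) : IsProb (gibbs c u f) :=
  isProb_normalized (gibbsWeight_nonneg hu.1) (sum_gibbsWeight_pos hu)

theorem mul_Dkl_add_sum_mul (hc : c ≠ 0) (htu : ∀ x, u x = 0 → t x = 0) :
    c * Dkl t u + ∑ x, t x * f x = c * Dkl t (gibbsWeight c u f) := by
  simp only [Dkl, Finset.mul_sum, ← Finset.sum_add_distrib]
  refine Finset.sum_congr rfl fun x _ => ?_
  by_cases h : t x = 0
  · simp [h]
  · have hux : u x ≠ 0 := mt (htu x) h
    rw [Real.logb_div h hux, Real.logb_div h (mt gibbsWeight_eq_zero_iff.1 hux), gibbsWeight,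
      Real.logb_mul hux (Real.rpow_pos_of_pos two_pos _).ne',
      Real.logb_rpow two_pos (by norm_num)]
    field_simp
    ring

theorem gibbs_variational_principle (hu : IsProb u) (hc : 0 < c) (ht : IsProb t)
    (htu : ∀ x, u x = 0 → t x = 0) :
    c * Dkl (gibbs c u f) u + ∑ x, gibbs c u f x * f x ≤ c * Dkl t u + ∑ x, t x * f x := by
  rw [mul_Dkl_add_sum_mul hc.ne' fun _ => gibbs_eq_zero, mul_Dkl_add_sum_mul hc.ne' htu, gibbs,
    Dkl_normalized_self (gibbsWeight_nonneg hu.1) (sum_gibbsWeight_pos hu)]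
  gcongr
  exact neg_logb_sum_le_Dkl ht (gibbsWeight_nonneg hu.1) fun x hx =>
    htu x (gibbsWeight_eq_zero_iff.1 hx)

end GibbsVariationalPrinciple

section Continuity

variable {ι X : Type*} [TopologicalSpace ι] [Fintype X] {I : Set ι}

theorem continuous_shannonEntropy : Continuous (shannonEntropy : (X → ℝ) → ℝ) := by
  have entropy_eq : (shannonEntropy : (X → ℝ) → ℝ) =
      fun t => -∑ x, t x * Real.log (t x) / Real.log 2 := by
    funext t
    simp only [shannonEntropy, Real.logb, mul_div_assoc]
  rw [entropy_eq]
  exact (continuous_finsetSum _ fun x _ =>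
    (Real.continuous_mul_log.comp (continuous_apply x)).div_const _).neg

theorem continuousOn_normalized {m : ι → X → ℝ} (hm : ∀ x, ContinuousOn (fun i => m i x) I)
    (hsum : ∀ i ∈ I, ∑ x, m i x ≠ 0) : ContinuousOn (fun i => normalized (m i)) I :=
  continuousOn_pi.2 fun x => (hm x).div (continuousOn_finsetSum _ fun y _ => hm y) hsum

theorem continuousOn_const_rpow_Ioi (b : ℝ) : ContinuousOn (fun α : ℝ => b ^ α) (Ioi 0) :=
  fun _ hα => (Real.continuousAt_const_rpow' (ne_of_gt hα)).continuousWithinAt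

variable {A : Type*} [Fintype A]

theorem continuousOn_escort {q : A → ℝ} (hq : IsProb q) :
    ContinuousOn (fun α => escort α q) (Ioi 0) :=
  continuousOn_normalized (fun a => continuousOn_const_rpow_Ioi (q a))
    fun α _ => (hq.sum_rpow_pos α).ne'

theorem continuousOn_mul_renyiEntropy {q : A → ℝ} (hq : IsProb q) :
    ContinuousOn (fun α => (1 - α) / α * renyiEntropy α q) (Ioi 0) := by
  have hcont : ContinuousOn (fun α => 1 / α * Real.logb 2 (∑ a, q a ^ α)) (Ioi 0) :=
    (continuousOn_const.div continuousOn_id fun α hα => ne_of_gt hα).mul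
      ((continuousOn_finsetSum _ fun a _ => continuousOn_const_rpow_Ioi (q a)).logb
        fun α _ => (hq.sum_rpow_pos α).ne')
  exact hcont.congr fun α hα => mul_renyiEntropy hq (ne_of_gt hα)

theorem continuousOn_gibbs {u : X → ℝ} {f : ι → X → ℝ} (c : ℝ) (hu : IsProb u)
    (hf : ∀ x, u x ≠ 0 → ContinuousOn (fun i => f i x) I) :
    ContinuousOn (fun i => gibbs c u (f i)) I := by
  refine continuousOn_normalized (fun x => ?_) fun i _ => (sum_gibbsWeight_pos hu).ne'
  by_cases hx : u x = 0
  · simpa only [gibbsWeight, hx, zero_mul] using continuousOn_const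
  · exact continuousOn_const.mul <| continuousOn_const.rpow ((hf x hx).neg.div_const c)
      fun _ _ => Or.inl two_ne_zero

end Continuity

section StrongDuality

theorem mul_le_max_mul_mul {l₀ l₁ l : ℝ} (hl : l ∈ Icc l₀ l₁) (x : ℝ) :
    l * x ≤ max (l₀ * x) (l₁ * x) := by
  rcases le_total 0 x with hx | hx
  · exact le_max_of_le_right (mul_le_mul_of_nonneg_right hl.2 hx)
  · exact le_max_of_le_left (mul_le_mul_of_nonpos_right hl.1 hx)

variable {ι Y : Type*} [TopologicalSpace ι] {I : Set ι} {i₀ i₁ : ι} {l : ι → ℝ}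

theorem exists_mul_eq_max_of_isPreconnected {h : ι → ℝ} (hI : IsPreconnected I) (hi₀ : i₀ ∈ I)
    (hi₁ : i₁ ∈ I) (hl : l i₀ ≤ l i₁) (hh : ContinuousOn h I) :
    ∃ i ∈ I, l i * h i = max (l i₀ * h i) (l i₁ * h i) := by
  rcases le_or_gt (h i₀) 0 with h₀ | h₀
  · exact ⟨i₀, hi₀, (max_eq_left (mul_le_mul_of_nonpos_right hl h₀)).symm⟩
  rcases le_or_gt 0 (h i₁) with h₁ | h₁
  · exact ⟨i₁, hi₁, (max_eq_right (mul_le_mul_of_nonneg_right hl h₁)).symm⟩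
  obtain ⟨i, hi, hi_zero⟩ := hI.intermediate_value hi₁ hi₀ hh ⟨h₁.le, h₀.le⟩
  exact ⟨i, hi, by simp only [hi_zero, mul_zero, max_self]⟩

theorem sSup_lagrangian_eq_sInf_max {S : Set Y} {F g : Y → ℝ} {y : ι → Y}
    (hI : IsPreconnected I) (hi₀ : i₀ ∈ I) (hi₁ : i₁ ∈ I) (hl : ∀ i ∈ I, l i ∈ Icc (l i₀) (l i₁))
    (hyS : ∀ i ∈ I, y i ∈ S) (hmin : ∀ i ∈ I, IsMinOn (fun z => F z + l i * g z) S (y i))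
    (hg : ContinuousOn (fun i => g (y i)) I) :
    sSup ((fun i => F (y i) + l i * g (y i)) '' I) =
      sInf ((fun z => F z + max (l i₀ * g z) (l i₁ * g z)) '' S) := by
  have weak_duality {i : ι} (hi : i ∈ I) {z : Y} (hz : z ∈ S) :
      F (y i) + l i * g (y i) ≤ F z + max (l i₀ * g z) (l i₁ * g z) :=
    (hmin i hi hz).trans (add_le_add_right (mul_le_max_mul_mul (hl i hi) _) _)
  obtain ⟨i, hi, slackness⟩ := exists_mul_eq_max_of_isPreconnected hI hi₀ hi₁ (hl i₁ hi₁).1 hg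
  have greatest : IsGreatest ((fun i => F (y i) + l i * g (y i)) '' I)
      (F (y i) + l i * g (y i)) := by
    refine ⟨mem_image_of_mem _ hi, forall_mem_image.2 fun j hj => ?_⟩
    rw [slackness]
    exact weak_duality hj (hyS i hi)
  have least : IsLeast ((fun z => F z + max (l i₀ * g z) (l i₁ * g z)) '' S)
      (F (y i) + l i * g (y i)) :=
    ⟨⟨y i, hyS i hi, by simp only [slackness]⟩, forall_mem_image.2 fun z hz => weak_duality hi hz⟩
  rw [greatest.csSup_eq, least.csInf_eq]

end StrongDuality

section PrivacyAmplification

variable {R A : Type*} [Fintype R] [Fintype A] {u t : R → ℝ} {q : R → A → ℝ}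
  {z : (R → ℝ) × (R → A → ℝ)} {ρ : A → ℝ} {c r α : ℝ}

/-- The objective `c D(t‖u) + ((1 - α) / α) (r - E_t H_α(q))` of the Rényi side. -/
noncomputable def renyiObjective (c : ℝ) (u : R → ℝ) (q : R → A → ℝ) (r α : ℝ) (t : R → ℝ) : ℝ :=
  c * Dkl t u + (1 - α) / α * (r - ∑ x, t x * renyiEntropy α (q x))

/-- The pairs `(t, τ)` over which the Shannon side is minimized; the support of `τ x` is only
constrained where `u x ≠ 0`. -/
def feasiblePairs (u : R → ℝ) (q : R → A → ℝ) : Set ((R → ℝ) × (R → A → ℝ)) :=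
  {z | IsProb z.1 ∧ (∀ x, u x = 0 → z.1 x = 0) ∧
    (∀ x, IsProb (z.2 x)) ∧ ∀ x a, u x ≠ 0 → q x a = 0 → z.2 x a = 0}

/-- The divergence cost `c D(t‖u) + E_t D(τ‖q)` of a pair `(t, τ)`. -/
noncomputable def divergenceCost (c : ℝ) (u : R → ℝ) (q : R → A → ℝ)
    (z : (R → ℝ) × (R → A → ℝ)) : ℝ :=
  c * Dkl z.1 u + ∑ x, z.1 x * Dkl (z.2 x) (q x)

/-- The amount `r - E_t H(τ)` by which the conditional entropy of a pair `(t, τ)` falls short of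
the rate `r`. -/
noncomputable def entropyDeficit (r : ℝ) (z : (R → ℝ) × (R → A → ℝ)) : ℝ :=
  r - ∑ x, z.1 x * shannonEntropy (z.2 x)

/-- The distribution on `R` minimizing the Rényi objective of order `α`. -/
noncomputable def optimalPrior (c : ℝ) (u : R → ℝ) (q : R → A → ℝ) (α : ℝ) : R → ℝ :=
  gibbs c u fun x => -((1 - α) / α * renyiEntropy α (q x))

/-- The minimizer of the Lagrangian with multiplier `(1 - α) / α`. Where `u x = 0` the conditional
distribution is immaterial and set to an arbitrary `ρ`. -/
noncomputable def optimalPair (ρ : A → ℝ) (c : ℝ) (u : R → ℝ) (q : R → A → ℝ) (α : ℝ) :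
    (R → ℝ) × (R → A → ℝ) :=
  (optimalPrior c u q α, fun x => if u x = 0 then ρ else escort α (q x))

theorem optimalPair_mem_feasiblePairs (hu : IsProb u) (hq : ∀ x, u x ≠ 0 → IsProb (q x))
    (hρ : IsProb ρ) (hα : α ≠ 0) : optimalPair ρ c u q α ∈ feasiblePairs u q := by
  refine ⟨hu.gibbs, fun _ hx => gibbs_eq_zero hx, fun x => ?_, fun x a hx ha => ?_⟩
  · by_cases hx : u x = 0
    · simpa only [optimalPair, if_pos hx] using hρ
    · simpa only [optimalPair, if_neg hx] using (hq x hx).escort α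
  · simpa only [optimalPair, if_neg hx] using escort_eq_zero hα ha

theorem renyiObjective_eq (t : R → ℝ) : renyiObjective c u q r α t = (1 - α) / α * r +
    (c * Dkl t u + ∑ x, t x * -((1 - α) / α * renyiEntropy α (q x))) := by
  simp only [renyiObjective, mul_neg, Finset.sum_neg_distrib, mul_left_comm (t _),
    ← Finset.mul_sum]
  ring

theorem divergenceCost_add_mul_entropyDeficit (s : ℝ) (z : (R → ℝ) × (R → A → ℝ)) :
    divergenceCost c u q z + s * entropyDeficit r z = s * r +
      (c * Dkl z.1 u + ∑ x, z.1 x * (Dkl (z.2 x) (q x) - s * shannonEntropy (z.2 x))) := by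
  simp only [divergenceCost, entropyDeficit, mul_sub, Finset.sum_sub_distrib,
    mul_left_comm (z.1 _), ← Finset.mul_sum]
  ring

theorem renyiObjective_optimalPrior_le (hu : IsProb u) (hc : 0 < c) (ht : IsProb t)
    (htu : ∀ x, u x = 0 → t x = 0) :
    renyiObjective c u q r α (optimalPrior c u q α) ≤ renyiObjective c u q r α t := by
  rw [renyiObjective_eq, renyiObjective_eq]
  exact add_le_add_right (gibbs_variational_principle hu hc ht htu) _

theorem renyiObjective_le_lagrangian (hq : ∀ x, u x ≠ 0 → IsProb (q x)) (hα : 0 < α)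
    (hz : z ∈ feasiblePairs u q) : renyiObjective c u q r α z.1 ≤
      divergenceCost c u q z + (1 - α) / α * entropyDeficit r z := by
  obtain ⟨ht, htu, hτ, hτq⟩ := hz
  rw [renyiObjective_eq, divergenceCost_add_mul_entropyDeficit]
  gcongr _ + (_ + ∑ x, ?_) with x
  by_cases hx : u x = 0
  · simp only [htu x hx, zero_mul, le_refl]
  · exact mul_le_mul_of_nonneg_left
      (neg_mul_renyiEntropy_le (hq x hx) hα (hτ x) fun a => hτq x a hx) (ht.1 x)

theorem lagrangian_optimalPair (hq : ∀ x, u x ≠ 0 → IsProb (q x)) (hα : α ≠ 0) :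
    divergenceCost c u q (optimalPair ρ c u q α) +
        (1 - α) / α * entropyDeficit r (optimalPair ρ c u q α) =
      renyiObjective c u q r α (optimalPrior c u q α) := by
  rw [renyiObjective_eq, divergenceCost_add_mul_entropyDeficit]
  congr 2
  refine Finset.sum_congr rfl fun x _ => ?_
  by_cases hx : u x = 0
  · simp only [optimalPair, optimalPrior, gibbs_eq_zero hx, zero_mul]
  · simp only [optimalPair, if_neg hx, Dkl_escort_sub_mul_shannonEntropy (hq x hx) hα]

theorem isMinOn_lagrangian_optimalPair (hu : IsProb u) (hq : ∀ x, u x ≠ 0 → IsProb (q x))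
    (hc : 0 < c) (hα : 0 < α) :
    IsMinOn (fun z => divergenceCost c u q z + (1 - α) / α * entropyDeficit r z)
      (feasiblePairs u q) (optimalPair ρ c u q α) := fun z hz =>
  calc divergenceCost c u q (optimalPair ρ c u q α) +
        (1 - α) / α * entropyDeficit r (optimalPair ρ c u q α)
      = renyiObjective c u q r α (optimalPrior c u q α) := lagrangian_optimalPair hq hα.ne'
    _ ≤ renyiObjective c u q r α z.1 := renyiObjective_optimalPrior_le hu hc hz.1 hz.2.1
    _ ≤ divergenceCost c u q z + (1 - α) / α * entropyDeficit r z :=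
        renyiObjective_le_lagrangian hq hα hz

theorem continuousOn_entropyDeficit_optimalPair (hu : IsProb u)
    (hq : ∀ x, u x ≠ 0 → IsProb (q x)) :
    ContinuousOn (fun α => entropyDeficit r (optimalPair ρ c u q α)) (Ioi 0) := by
  have prior_cont : ContinuousOn (optimalPrior c u q) (Ioi 0) :=
    continuousOn_gibbs c hu fun x hx => (continuousOn_mul_renyiEntropy (hq x hx)).neg
  refine continuousOn_const.sub (continuousOn_finsetSum _ fun x _ =>
    (continuousOn_pi.1 prior_cont x).mul (continuous_shannonEntropy.comp_continuousOn ?_))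
  by_cases hx : u x = 0
  · simpa only [optimalPair, if_pos hx] using continuousOn_const
  · simpa only [optimalPair, if_neg hx] using continuousOn_escort (hq x hx)

theorem sInf_renyiObjective (hu : IsProb u) (hc : 0 < c) :
    sInf {w | ∃ t : R → ℝ, IsProb t ∧ (∀ x, u x = 0 → t x = 0) ∧
        w = renyiObjective c u q r α t} =
      renyiObjective c u q r α (optimalPrior c u q α) := by
  refine IsLeast.csInf_eq ⟨⟨_, hu.gibbs, fun x => gibbs_eq_zero, rfl⟩, ?_⟩
  rintro _ ⟨t, ht, htu, rfl⟩
  exact renyiObjective_optimalPrior_le hu hc ht htu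

theorem multiplier_mem_Icc {β γ : ℝ} (hβ : 0 < β) (hα : α ∈ Icc β γ) :
    (1 - α) / α ∈ Icc ((1 - γ) / γ) ((1 - β) / β) := by
  have antitone {a b : ℝ} (ha : 0 < a) (hab : a ≤ b) : (1 - b) / b ≤ (1 - a) / a := by
    rw [div_le_div_iff₀ (ha.trans_le hab) ha]
    linarith
  exact ⟨antitone (hβ.trans_le hα.1) hα.2, antitone hβ hα.1⟩

theorem privacy_amplification_variational_general (hu : IsProb u)
    (hq : ∀ x, u x ≠ 0 → IsProb (q x)) (r : ℝ) (hc : 0 < c) {β γ : ℝ} (hβ : 0 < β) (hβγ : β ≤ γ) :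
    sSup {v | ∃ α ∈ Icc β γ,
        v = sInf {w | ∃ t : R → ℝ, IsProb t ∧ (∀ x, u x = 0 → t x = 0) ∧
          w = c * Dkl t u + (1 - α) / α * (r - ∑ x, t x * renyiEntropy α (q x))}} =
      sInf {w | ∃ t : R → ℝ, IsProb t ∧ (∀ x, u x = 0 → t x = 0) ∧
        ∃ τ : R → A → ℝ, (∀ x, IsProb (τ x)) ∧
          (∀ x a, u x ≠ 0 → q x a = 0 → τ x a = 0) ∧
          w = c * Dkl t u + (∑ x, t x * Dkl (τ x) (q x)) +
            max ((1 - γ) / γ * (r - ∑ x, t x * shannonEntropy (τ x)))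
              ((1 - β) / β * (r - ∑ x, t x * shannonEntropy (τ x)))} := by
  obtain ⟨x₀, hx₀⟩ := hu.exists_ne_zero
  have pos {α : ℝ} (hα : α ∈ Icc β γ) : 0 < α := hβ.trans_le hα.1
  have duality := sSup_lagrangian_eq_sInf_max (l := fun α => (1 - α) / α)
    (F := divergenceCost c u q) (g := entropyDeficit r) (y := optimalPair (q x₀) c u q)
    isPreconnected_Icc (right_mem_Icc.2 hβγ) (left_mem_Icc.2 hβγ)
    (fun α hα => multiplier_mem_Icc hβ hα)
    (fun α hα => optimalPair_mem_feasiblePairs hu hq (hq x₀ hx₀) (pos hα).ne')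
    (fun α hα => isMinOn_lagrangian_optimalPair hu hq hc (pos hα))
    ((continuousOn_entropyDeficit_optimalPair hu hq).mono fun α => pos)
  convert duality using 2
  · ext v
    refine exists_congr fun α => and_congr_right fun hα => ?_
    beta_reduce
    rw [eq_comm, lagrangian_optimalPair hq (pos hα).ne', ← sInf_renyiObjective hu hc]
    rfl
  · ext w
    simp only [feasiblePairs, divergenceCost, entropyDeficit, mem_image, mem_ofPred_eq, Prod.exists,
      exists_and_left, and_assoc, eq_comm (a := w)]

variable {p : R × A → ℝ}

theorem IsProb.marginal (hp : IsProb p) : IsProb fun x => ∑ a, p (x, a) :=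
  ⟨fun x => Finset.sum_nonneg fun a _ => hp.1 (x, a), by rw [← Fintype.sum_prod_type, hp.2]⟩

theorem IsProb.conditional (hp : IsProb p) {x : R} (hx : ∑ a, p (x, a) ≠ 0) :
    IsProb fun a => p (x, a) / ∑ b, p (x, b) :=
  isProb_normalized (fun a => hp.1 (x, a)) ((hp.marginal.1 x).lt_of_ne' hx)

end PrivacyAmplification

/-- Variational expression for the strong converse exponent of classical privacy amplification:
`sup_{1/2≤α≤1} inf_t [2D(t‖p_R) + ((1-α)/α)(r - E_{x∼t} H_α(p(·|x)))]`
`  = inf_t inf_τ [2D(t‖p_R) + E_{x∼t} D(τ^x‖p(·|x)) + max{0, r - E_{x∼t} H(τ^x)}]`. -/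
theorem privacy_amplification_variational {R A : Type*} [Fintype R] [Fintype A]
    (p : R × A → ℝ) (hp : IsProb p) (r : ℝ) (hr : 0 ≤ r)
    (pR : R → ℝ) (hpR : pR = fun x => ∑ a, p (x, a))
    (pc : R → A → ℝ) (hpc : pc = fun x a => p (x, a) / pR x) :
    sSup {v | ∃ α ∈ Set.Icc (1/2 : ℝ) 1,
        v = sInf {w | ∃ t : R → ℝ, IsProb t ∧ (∀ x, pR x = 0 → t x = 0) ∧
          w = 2 * Dkl t pR + ((1 - α) / α) * (r - ∑ x, t x * renyiEntropy α (pc x))}} =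
      sInf {w | ∃ t : R → ℝ, IsProb t ∧ (∀ x, pR x = 0 → t x = 0) ∧
        ∃ τ : R → A → ℝ, (∀ x, IsProb (τ x)) ∧
          (∀ x a, pR x ≠ 0 → pc x a = 0 → τ x a = 0) ∧
          w = 2 * Dkl t pR + (∑ x, t x * Dkl (τ x) (pc x)) +
            max 0 (r - ∑ x, t x * shannonEntropy (τ x))} := by
  have hu : IsProb pR := hpR ▸ hp.marginal
  have hq : ∀ x, pR x ≠ 0 → IsProb (pc x) := hpc ▸ hpR ▸ fun x => hp.conditional
  simpa only [sub_self, zero_div, zero_mul, show (1 - 1 / 2 : ℝ) / (1 / 2) = 1 by norm_num,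
    one_mul] using privacy_amplification_variational_general hu hq r two_pos one_half_pos
      one_half_lt_one.le
end
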